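/- Let 1 ≤ p < ∞ and let u_1, u_2, u_3, u_4 : M_N → M_N be completely positive linear maps with ‖u_j(x)‖_{S_p} ≤ C_j ‖x‖_{S_p} for all x ∈ M_N (j = 1, 2, 3, 4). Then the map u = u_1 − u_2 + i(u_3 − u_4) has regular norm ‖u‖_r ≤ C_1 + C_2 + C_3 + C_4; in particular every linear combination of bounded completely positive maps on M_N is regular. (The implication (iii) ⟹ (i) of Theorem 0.1, in the matrix-algebra case, with quantitative bound.) -/

import Mathlib

open scoped Kronecker ENNReal Classical ComplexOrder
open Matrix

noncomputable section

/-- The operator norm (`S_∞` norm) of a complex matrix, acting on Euclidean space. -/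
def opNorm {ι : Type} [Fintype ι] [DecidableEq ι] (a : Matrix ι ι ℂ) : ℝ :=
  ‖LinearMap.toContinuousLinearMap (Matrix.toEuclideanLin a)‖

/-- The Schatten `p`-norm of a complex matrix: the `ℓ^p` norm of its singular values
(the square roots of the eigenvalues of `aᴴ * a`); for `p = ∞` it is the operator norm. -/
def schattenNorm {ι : Type} [Fintype ι] [DecidableEq ι] (p : ℝ≥0∞) (a : Matrix ι ι ℂ) : ℝ :=
  if p = ∞ then opNorm a
  else (∑ i, Real.sqrt ((Matrix.posSemidef_conjTranspose_mul_self a).isHermitian.eigenvalues i) ^ p.toReal)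
      ^ (1 / p.toReal)

/-- Pisier's vector-valued Schatten norm `‖x‖_{S_p^N[M_n]}` on `M_N ⊗ M_n`:
the infimum of `‖a‖_{S_{2p}} ‖y‖_{S_∞} ‖b‖_{S_{2p}}` over factorizations
`x = (a ⊗ 1) · y · (b ⊗ 1)`. -/
def pisierNorm (p : ℝ≥0∞) {N n : ℕ} (x : Matrix (Fin N × Fin n) (Fin N × Fin n) ℂ) : ℝ :=
  sInf { r | ∃ (a b : Matrix (Fin N) (Fin N) ℂ)
      (y : Matrix (Fin N × Fin n) (Fin N × Fin n) ℂ),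
      x = (a ⊗ₖ (1 : Matrix (Fin n) (Fin n) ℂ)) * y * (b ⊗ₖ (1 : Matrix (Fin n) (Fin n) ℂ)) ∧
      r = schattenNorm (2 * p) a * opNorm y * schattenNorm (2 * p) b }

/-- The amplification `u ⊗ id_{M_n} : M_N ⊗ M_n → M_m ⊗ M_n` of a map `u : M_N → M_m`,
acting as `u` on each `M_n`-block entry. -/
def amp {N m n : ℕ} (u : Matrix (Fin N) (Fin N) ℂ → Matrix (Fin m) (Fin m) ℂ)
    (x : Matrix (Fin N × Fin n) (Fin N × Fin n) ℂ) : Matrix (Fin m × Fin n) (Fin m × Fin n) ℂ :=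
  Matrix.of fun ik jl => u (Matrix.of fun i j => x (i, ik.2) (j, jl.2)) ik.1 jl.1

/-- The amplification `id_{M_n} ⊗ u : M_n ⊗ M_N → M_n ⊗ M_m` of a map `u : M_N → M_m`. -/
def ampLeft {n N m : ℕ} (u : Matrix (Fin N) (Fin N) ℂ → Matrix (Fin m) (Fin m) ℂ)
    (x : Matrix (Fin n × Fin N) (Fin n × Fin N) ℂ) : Matrix (Fin n × Fin m) (Fin n × Fin m) ℂ :=
  Matrix.of fun ki lj => u (Matrix.of fun i j => x (ki.1, i) (lj.1, j)) ki.2 lj.2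

/-- The trace pairing `T : M_k ⊗ M_k → ℂ`, with `T(a ⊗ b) = tr(ᵗa·b)`; writing
`z` as a `k×k` matrix of blocks `z_{ij} ∈ M_k`, `T(z) = Σ_{i,j} (z_{ij})_{ij}`. -/
def tracePair {k : ℕ} (z : Matrix (Fin k × Fin k) (Fin k × Fin k) ℂ) : ℂ :=
  ∑ i : Fin k, ∑ j : Fin k, z (i, i) (j, j)

/-- A map `u : M_N → M_m` is completely positive if all its amplifications
`id_{M_n} ⊗ u` preserve positive semidefiniteness. -/
def CompletelyPositive {N m : ℕ}
    (u : Matrix (Fin N) (Fin N) ℂ → Matrix (Fin m) (Fin m) ℂ) : Prop :=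
  ∀ (n : ℕ) (x : Matrix (Fin n × Fin N) (Fin n × Fin N) ℂ),
    x.PosSemidef → (ampLeft u x).PosSemidef

/-- The regular norm (relative to `p`) of `u : M_N → M_m`: the supremum in `[0,∞]`
over `n ≥ 1` of the norms of the amplifications `u ⊗ id_{M_n}` from
`(M_N ⊗ M_n, ‖·‖_{S_p^N[M_n]})` to `(M_m ⊗ M_n, ‖·‖_{S_p^m[M_n]})`. -/
def regNorm (p : ℝ≥0∞) {N m : ℕ}
    (u : Matrix (Fin N) (Fin N) ℂ → Matrix (Fin m) (Fin m) ℂ) : ℝ≥0∞ :=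
  ⨆ (n : ℕ) (x : Matrix (Fin N × Fin (n + 1)) (Fin N × Fin (n + 1)) ℂ)
    (_ : pisierNorm p x ≤ 1), ENNReal.ofReal (pisierNorm p (amp u x))

/-- Pisier's norm `ρ_p` on `M_n ⊗ M_m` (with `q` the conjugate exponent `p'`):
the infimum of `‖γ‖_{S_{2p}} ‖α‖_{S_{2p'}} ‖g‖_{S_∞} ‖δ‖_{S_{2p}} ‖β‖_{S_{2p'}}`
over factorizations `a = (γ ⊗ α) · g · (δ ⊗ β)`. -/
def rho (p q : ℝ≥0∞) {n m : ℕ} (a : Matrix (Fin n × Fin m) (Fin n × Fin m) ℂ) : ℝ :=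
  sInf { r | ∃ (γ δ : Matrix (Fin n) (Fin n) ℂ) (α β : Matrix (Fin m) (Fin m) ℂ)
      (g : Matrix (Fin n × Fin m) (Fin n × Fin m) ℂ),
      a = (γ ⊗ₖ α) * g * (δ ⊗ₖ β) ∧
      r = schattenNorm (2 * p) γ * schattenNorm (2 * q) α * opNorm g *
          schattenNorm (2 * p) δ * schattenNorm (2 * q) β }

/-- The amplification `u ⊗ id_{M_n}` of a map `u` defined only on a subspace `S ⊆ M_N`,
applied to an element of `M_N ⊗ M_n` all of whose `M_N`-valued block entries lie in `S`. -/
def ampOn {N m n : ℕ} (S : Submodule ℂ (Matrix (Fin N) (Fin N) ℂ))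
    (u : S →ₗ[ℂ] Matrix (Fin m) (Fin m) ℂ)
    (x : Matrix (Fin N × Fin n) (Fin N × Fin n) ℂ)
    (h : ∀ k l : Fin n, (Matrix.of fun i j => x (i, k) (j, l)) ∈ S) :
    Matrix (Fin m × Fin n) (Fin m × Fin n) ℂ :=
  Matrix.of fun ik jl => u ⟨Matrix.of fun i j => x (i, ik.2) (j, jl.2), h ik.2 jl.2⟩ ik.1 jl.1

end

section Schatten

variable {ι : Type} [Fintype ι] [DecidableEq ι]

lemma opNorm_nonneg (a : Matrix ι ι ℂ) : 0 ≤ opNorm a := norm_nonneg _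

lemma schattenNorm_nonneg (p : ℝ≥0∞) (a : Matrix ι ι ℂ) : 0 ≤ schattenNorm p a := by
  unfold schattenNorm
  split_ifs
  · exact opNorm_nonneg a
  · positivity

lemma exists_unitary_diagonalization {A : Matrix ι ι ℂ} (hA : A.PosSemidef) :
    ∃ (U : Matrix ι ι ℂ) (d : ι → ℝ), Uᴴ * U = 1 ∧ U * Uᴴ = 1 ∧ (∀ i, 0 ≤ d i) ∧
      A = U * diagonal (fun i => (d i : ℂ)) * Uᴴ := by
  refine ⟨hA.1.eigenvectorUnitary, hA.1.eigenvalues, ?_, ?_, hA.eigenvalues_nonneg, ?_⟩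
  · exact Unitary.coe_star_mul_self hA.1.eigenvectorUnitary
  · exact Unitary.coe_mul_star_self hA.1.eigenvectorUnitary
  · have := hA.1.spectral_theorem
    rw [Unitary.conjStarAlgAut_apply] at this
    exact this

/-- A symmetric function of the eigenvalues can be computed from any unitary diagonalization. -/
lemma sum_eigenvalues_eq_of_diagonalization {A U : Matrix ι ι ℂ} {d : ι → ℝ}
    (hA : A.IsHermitian) (hU : Uᴴ * U = 1)
    (hAU : A = U * diagonal (fun i => (d i : ℂ)) * Uᴴ) (f : ℝ → ℝ) :
    ∑ i, f (hA.eigenvalues i) = ∑ i, f (d i) := by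
  have hchar : A.charpoly = ∏ i, (Polynomial.X - Polynomial.C (d i : ℂ)) := by
    rw [hAU, charpoly_mul_comm, ← mul_assoc, hU, one_mul, charpoly_diagonal]
  have hroots : Multiset.map (RCLike.ofReal ∘ hA.eigenvalues) Finset.univ.val =
      Multiset.map (fun i => (d i : ℂ)) Finset.univ.val := by
    rw [← hA.roots_charpoly_eq_eigenvalues, hchar, Polynomial.roots_prod]
    · simp
    · simp [Finset.prod_ne_zero_iff, Polynomial.X_sub_C_ne_zero]
  have h := congrArg (fun s : Multiset ℂ => (s.map fun z => f z.re).sum) hroots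
  simpa [Multiset.map_map] using h

lemma schattenNorm_eq_of_diagonalization {p : ℝ≥0∞} (hptop : p ≠ ∞) {A U : Matrix ι ι ℂ}
    {d : ι → ℝ} (hd : ∀ i, 0 ≤ d i) (hU : Uᴴ * U = 1)
    (hAU : A = U * diagonal (fun i => (d i : ℂ)) * Uᴴ) :
    schattenNorm p A = (∑ i, d i ^ p.toReal) ^ (1 / p.toReal) := by
  rw [schattenNorm, if_neg hptop]
  have hsq : Aᴴ * A = U * diagonal (fun i => ((d i ^ 2 : ℝ) : ℂ)) * Uᴴ := by
    have hdd : (diagonal (fun i => (d i : ℂ)))ᴴ = (diagonal (fun i => (d i : ℂ))) := by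
      rw [diagonal_conjTranspose]
      congr 1
      ext i
      simp
    have : (fun i => ((d i ^ 2 : ℝ) : ℂ)) = fun i => (d i : ℂ) * (d i : ℂ) := by
      ext i; push_cast; ring
    rw [hAU, this, ← diagonal_mul_diagonal]
    simp only [conjTranspose_mul, conjTranspose_conjTranspose, hdd, mul_assoc]
    rw [← mul_assoc Uᴴ U, hU, one_mul]
  rw [sum_eigenvalues_eq_of_diagonalization _ hU hsq (fun x => Real.sqrt x ^ p.toReal)]
  congr 1
  exact Finset.sum_congr rfl fun i _ => by rw [Real.sqrt_sq (hd i)]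

lemma schattenNorm_conjTranspose {p : ℝ≥0∞} (hptop : p ≠ ∞) (a : Matrix ι ι ℂ) :
    schattenNorm p aᴴ = schattenNorm p a := by
  rw [schattenNorm, schattenNorm, if_neg hptop, if_neg hptop]
  have : (posSemidef_conjTranspose_mul_self aᴴ).isHermitian.eigenvalues =
      (posSemidef_conjTranspose_mul_self a).isHermitian.eigenvalues := by
    rw [IsHermitian.eigenvalues_eq_eigenvalues_iff, conjTranspose_conjTranspose,
      charpoly_mul_comm]
  rw [this]

lemma schattenNorm_conjTranspose_mul_self {p : ℝ≥0∞} (hptop : p ≠ ∞)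
    (a : Matrix ι ι ℂ) : schattenNorm p (aᴴ * a) = schattenNorm (2 * p) a ^ 2 := by
  have h := posSemidef_conjTranspose_mul_self a
  have hspec := h.1.spectral_theorem
  rw [Unitary.conjStarAlgAut_apply] at hspec
  have h2p : 2 * p ≠ ∞ := ENNReal.mul_ne_top (by simp) hptop
  rw [schattenNorm_eq_of_diagonalization hptop h.eigenvalues_nonneg
    (Unitary.coe_star_mul_self h.1.eigenvectorUnitary) hspec, schattenNorm, if_neg h2p,
    ENNReal.toReal_mul, ENNReal.toReal_ofNat]
  have hsum : ∑ i, Real.sqrt (h.1.eigenvalues i) ^ (2 * p.toReal) =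
      ∑ i, h.1.eigenvalues i ^ p.toReal := by
    refine Finset.sum_congr rfl fun i _ => ?_
    rw [Real.rpow_mul (Real.sqrt_nonneg _), Real.rpow_two, Real.sq_sqrt (h.eigenvalues_nonneg i)]
  rw [hsum, ← Real.rpow_mul_natCast
    (Finset.sum_nonneg fun i _ => Real.rpow_nonneg (h.eigenvalues_nonneg i) _)]
  congr 1
  push_cast
  field_simp

lemma schattenNorm_mul_conjTranspose_self {p : ℝ≥0∞} (hptop : p ≠ ∞)
    (a : Matrix ι ι ℂ) : schattenNorm p (a * aᴴ) = schattenNorm (2 * p) a ^ 2 := by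
  have h := schattenNorm_conjTranspose_mul_self hptop aᴴ
  rwa [conjTranspose_conjTranspose,
    schattenNorm_conjTranspose (ENNReal.mul_ne_top (by simp) hptop)] at h

lemma schattenNorm_smul_of_posSemidef {p : ℝ≥0∞} (hp : 1 ≤ p) (hptop : p ≠ ∞) {t : ℝ}
    (ht : 0 ≤ t) {A : Matrix ι ι ℂ} (hA : A.PosSemidef) :
    schattenNorm p ((t : ℂ) • A) = t * schattenNorm p A := by
  obtain ⟨U, d, hU, -, hd, hAU⟩ := exists_unitary_diagonalization hA
  have hq : 0 < p.toReal := ENNReal.toReal_pos (by positivity) hptop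
  have htA : (t : ℂ) • A = U * diagonal (fun i => ((t * d i : ℝ) : ℂ)) * Uᴴ := by
    have : (fun i => ((t * d i : ℝ) : ℂ)) = (t : ℂ) • fun i => (d i : ℂ) := by
      ext i; simp
    rw [this, diagonal_smul, hAU]
    simp
  rw [schattenNorm_eq_of_diagonalization hptop (fun i => mul_nonneg ht (hd i)) hU htA,
    schattenNorm_eq_of_diagonalization hptop hd hU hAU]
  simp_rw [Real.mul_rpow ht (hd _)]
  rw [← Finset.mul_sum, Real.mul_rpow (by positivity)
    (Finset.sum_nonneg fun i _ => Real.rpow_nonneg (hd i) _), ← Real.rpow_mul ht,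
    mul_one_div_cancel hq.ne', Real.rpow_one]

/-- The diagonal of a positive matrix in an orthonormal basis has `ℓ^p` norm at most its
Schatten `p`-norm. -/
lemma sum_diag_rpow_le_schattenNorm {p : ℝ≥0∞} (hp : 1 ≤ p) (hptop : p ≠ ∞)
    {A V : Matrix ι ι ℂ} (hA : A.PosSemidef) (hV : Vᴴ * V = 1) (hV' : V * Vᴴ = 1) :
    (∑ i, ((Vᴴ * A * V) i i).re ^ p.toReal) ^ (1 / p.toReal) ≤ schattenNorm p A := by
  obtain ⟨U, d, hU, hU', hd, hAU⟩ := exists_unitary_diagonalization hA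
  have hq : 1 ≤ p.toReal := by
    simpa using ENNReal.toReal_mono hptop hp
  rw [schattenNorm_eq_of_diagonalization hptop hd hU hAU]
  set W := Vᴴ * U with hW
  have hWr : W * Wᴴ = 1 := by
    rw [hW, conjTranspose_mul, conjTranspose_conjTranspose, mul_assoc, ← mul_assoc U, hU',
      one_mul, hV]
  have hWl : Wᴴ * W = 1 := by
    rw [hW, conjTranspose_mul, conjTranspose_conjTranspose, mul_assoc, ← mul_assoc V, hV',
      one_mul, hU]
  have hentry : ∀ i, ((Vᴴ * A * V) i i).re = ∑ k, ‖W i k‖ ^ 2 * d k := by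
    intro i
    have : Vᴴ * A * V = W * diagonal (fun i => (d i : ℂ)) * Wᴴ := by
      rw [hAU, hW, conjTranspose_mul, conjTranspose_conjTranspose]
      simp only [mul_assoc]
    rw [this, mul_apply, Complex.re_sum]
    refine Finset.sum_congr rfl fun k _ => ?_
    rw [mul_diagonal, conjTranspose_apply, mul_right_comm, Complex.star_def, Complex.mul_conj,
      ← Complex.ofReal_mul, Complex.ofReal_re, Complex.normSq_eq_norm_sq]
  have hrow : ∀ i, ∑ k, ‖W i k‖ ^ 2 = 1 := by
    intro i
    have := congrFun (congrFun hWr i) i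
    rw [mul_apply, one_apply_eq] at this
    simp only [conjTranspose_apply, Complex.star_def, Complex.mul_conj,
      Complex.normSq_eq_norm_sq] at this
    exact_mod_cast this
  have hcol : ∀ k, ∑ i, ‖W i k‖ ^ 2 = 1 := by
    intro i
    have := congrFun (congrFun hWl i) i
    rw [mul_apply, one_apply_eq] at this
    simp only [conjTranspose_apply, Complex.star_def, Complex.conj_mul'] at this
    exact_mod_cast this
  refine Real.rpow_le_rpow (Finset.sum_nonneg fun i _ => Real.rpow_nonneg ?_ _) ?_ (by positivity)
  · rw [hentry]
    exact Finset.sum_nonneg fun k _ => mul_nonneg (by positivity) (hd k)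
  calc ∑ i, ((Vᴴ * A * V) i i).re ^ p.toReal
      ≤ ∑ i, ∑ k, ‖W i k‖ ^ 2 * d k ^ p.toReal := by
        refine Finset.sum_le_sum fun i _ => ?_
        rw [hentry]
        exact Real.rpow_arith_mean_le_arith_mean_rpow _ _ _ (fun _ _ => by positivity) (hrow i)
          (fun k _ => hd k) hq
    _ = ∑ k, d k ^ p.toReal := by
        rw [Finset.sum_comm]
        simp_rw [← Finset.sum_mul, hcol, one_mul]

/-- Minkowski's inequality for the Schatten norm of positive matrices. -/
lemma schattenNorm_add_le_of_posSemidef {p : ℝ≥0∞} (hp : 1 ≤ p) (hptop : p ≠ ∞)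
    {A B : Matrix ι ι ℂ} (hA : A.PosSemidef) (hB : B.PosSemidef) :
    schattenNorm p (A + B) ≤ schattenNorm p A + schattenNorm p B := by
  obtain ⟨V, d, hV, hV', hd, hABV⟩ := exists_unitary_diagonalization (hA.add hB)
  have hq : 1 ≤ p.toReal := by
    simpa using ENNReal.toReal_mono hptop hp
  rw [schattenNorm_eq_of_diagonalization hptop hd hV hABV]
  have hdiag : ∀ i, d i = ((Vᴴ * A * V) i i).re + ((Vᴴ * B * V) i i).re := by
    intro i
    have : Vᴴ * A * V + Vᴴ * B * V = diagonal (fun i => (d i : ℂ)) := by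
      rw [← add_mul, ← mul_add, hABV]
      simp only [mul_assoc, hV, mul_one]
      rw [← mul_assoc, hV, one_mul]
    rw [← Complex.add_re, ← Matrix.add_apply, this]
    simp
  have hnn : ∀ {M : Matrix ι ι ℂ}, M.PosSemidef → ∀ i, 0 ≤ ((Vᴴ * M * V) i i).re :=
    fun hM i => (Complex.nonneg_iff.mp (hM.conjTranspose_mul_mul_same V).diag_nonneg).1
  simp_rw [hdiag]
  exact (Real.Lp_add_le_of_nonneg _ hq (fun i _ => hnn hA i) (fun i _ => hnn hB i)).trans
    (add_le_add (sum_diag_rpow_le_schattenNorm hp hptop hA hV hV')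
      (sum_diag_rpow_le_schattenNorm hp hptop hB hV hV'))

lemma schattenNorm_one_pos [Nonempty ι] {p : ℝ≥0∞} (hptop : p ≠ ∞) :
    0 < schattenNorm p (1 : Matrix ι ι ℂ) := by
  have h : (1 : Matrix ι ι ℂ) = 1 * diagonal (fun _ => ((1 : ℝ) : ℂ)) * 1ᴴ := by simp
  rw [schattenNorm_eq_of_diagonalization hptop (fun _ => zero_le_one) (by simp) h]
  simp only [Real.one_rpow]
  exact Real.rpow_pos_of_pos (by simp [Fintype.card_pos]) _

lemma schattenNorm_eq_zero_of_isEmpty [IsEmpty ι] {p : ℝ≥0∞} (hptop : p ≠ ∞) (hp : p ≠ 0)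
    (a : Matrix ι ι ℂ) : schattenNorm p a = 0 := by
  rw [schattenNorm, if_neg hptop, Finset.univ_eq_empty, Finset.sum_empty,
    Real.zero_rpow (one_div_ne_zero (ENNReal.toReal_ne_zero.mpr ⟨hp, hptop⟩))]

lemma opNorm_le_iff {t : ℝ} (ht : 0 ≤ t) (y : Matrix ι ι ℂ) :
    opNorm y ≤ t ↔ (((t ^ 2 : ℝ) : ℂ) • (1 : Matrix ι ι ℂ) - yᴴ * y).PosSemidef := by
  have hherm : (((t ^ 2 : ℝ) : ℂ) • (1 : Matrix ι ι ℂ) - yᴴ * y).IsHermitian := by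
    refine IsHermitian.sub ?_ (posSemidef_conjTranspose_mul_self y).1
    rw [Matrix.IsHermitian, conjTranspose_smul, conjTranspose_one, Complex.star_def,
      Complex.conj_ofReal]
  have hnorm : ∀ v : ι → ℂ, star v ⬝ᵥ v = ((‖WithLp.toLp 2 v‖ ^ 2 : ℝ) : ℂ) := by
    intro v
    rw [EuclideanSpace.norm_sq_eq]
    simp [dotProduct, Complex.conj_mul']
  have hform : ∀ v : ι → ℂ,
      star v ⬝ᵥ (((t ^ 2 : ℝ) : ℂ) • (1 : Matrix ι ι ℂ) - yᴴ * y) *ᵥ v =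
      (((t * ‖WithLp.toLp 2 v‖) ^ 2 - ‖WithLp.toLp 2 (y *ᵥ v)‖ ^ 2 : ℝ) : ℂ) := by
    intro v
    rw [sub_mulVec, smul_mulVec, one_mulVec, dotProduct_sub, dotProduct_smul, hnorm,
      ← mulVec_mulVec, dotProduct_mulVec, vecMul_conjTranspose, star_star, hnorm]
    push_cast
    rw [smul_eq_mul]
    ring
  rw [posSemidef_iff_dotProduct_mulVec, opNorm, ContinuousLinearMap.opNorm_le_iff ht]
  constructor
  · intro h
    refine ⟨hherm, fun v => ?_⟩
    rw [hform, Complex.zero_le_real, sub_nonneg]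
    exact pow_le_pow_left₀ (norm_nonneg _) (h (WithLp.toLp 2 v)) 2
  · rintro ⟨-, h⟩ v
    have := h v.ofLp
    rw [hform, Complex.zero_le_real, sub_nonneg] at this
    exact le_of_sq_le_sq this (by positivity)

end Schatten

section Blocks

variable {κ : Type} [Fintype κ] [DecidableEq κ]

lemma posSemidef_fromBlocks_of_opNorm {t : ℝ} {y : Matrix κ κ ℂ} (hy : opNorm y ≤ t) :
    (fromBlocks ((t : ℂ) • 1) y yᴴ ((t : ℂ) • 1)).PosSemidef := by
  have ht : 0 ≤ t := (opNorm_nonneg y).trans hy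
  rcases ht.eq_or_lt with rfl | ht
  · have : y = 0 := by
      have h := norm_le_zero_iff.mp hy
      exact (Matrix.toEuclideanLin (𝕜 := ℂ)).injective
        (LinearMap.toContinuousLinearMap.injective (by simpa using h))
    subst this
    simpa using PosSemidef.zero
  · have hpos : ((t : ℂ) • (1 : Matrix κ κ ℂ)).PosDef :=
      PosDef.one.smul (Complex.zero_lt_real.mpr ht)
    have htc : (t : ℂ) ≠ 0 := by exact_mod_cast ht.ne'
    have hinv : ((t : ℂ) • (1 : Matrix κ κ ℂ))⁻¹ = (t : ℂ)⁻¹ • 1 := by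
      apply inv_eq_right_inv
      rw [smul_mul_smul_comm, mul_inv_cancel₀ htc, one_mul, one_smul]
    let := hpos.isUnit.invertible
    rw [PosDef.fromBlocks₁₁ _ _ hpos, hinv]
    have h := ((opNorm_le_iff ht.le y).mp hy).smul
      (Complex.zero_le_real.mpr (inv_nonneg.mpr ht.le))
    have heq : ((t⁻¹ : ℝ) : ℂ) • (((t ^ 2 : ℝ) : ℂ) • (1 : Matrix κ κ ℂ) - yᴴ * y) =
        (t : ℂ) • 1 - yᴴ * ((t : ℂ)⁻¹ • (1 : Matrix κ κ ℂ)) * y := by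
      have hscalar : ((t⁻¹ : ℝ) : ℂ) * ((t ^ 2 : ℝ) : ℂ) = t := by
        push_cast
        field_simp
      rw [smul_sub, smul_smul, hscalar]
      simp
    rwa [heq] at h

lemma opNorm_le_one_of_posSemidef_fromBlocks {y y' : Matrix κ κ ℂ}
    (h : (fromBlocks 1 y y' 1).PosSemidef) : opNorm y ≤ 1 := by
  have hy' : y' = yᴴ := by
    have := h.1
    rw [isHermitian_fromBlocks_iff] at this
    exact this.2.1.symm
  subst hy'
  let : Invertible (1 : Matrix κ κ ℂ) := invertibleOne
  rw [PosDef.fromBlocks₁₁ _ _ PosDef.one] at h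
  rw [opNorm_le_iff zero_le_one]
  simpa using h

lemma posSemidef_fromBlocks_smul {A X X' B : Matrix κ κ ℂ}
    (h : (fromBlocks A X X' B).PosSemidef) {ε : ℂ} (hε : star ε * ε = 1) :
    (fromBlocks A (ε • X) (star ε • X') B).PosSemidef := by
  have h' := h.conjTranspose_mul_mul_same (fromBlocks (1 : Matrix κ κ ℂ) 0 0 (ε • (1 : Matrix κ κ ℂ)))
  rw [fromBlocks_conjTranspose, fromBlocks_multiply, fromBlocks_multiply] at h'
  rw [Complex.star_def, mul_comm] at hε
  simpa [smul_smul, hε] using h'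

end Blocks

section Pisier

variable {N n : ℕ}

lemma pisierNorm_le {p : ℝ≥0∞} {x y : Matrix (Fin N × Fin n) (Fin N × Fin n) ℂ}
    {a b : Matrix (Fin N) (Fin N) ℂ}
    (h : x = (a ⊗ₖ (1 : Matrix (Fin n) (Fin n) ℂ)) * y * (b ⊗ₖ (1 : Matrix (Fin n) (Fin n) ℂ))) :
    pisierNorm p x ≤ schattenNorm (2 * p) a * opNorm y * schattenNorm (2 * p) b := by
  refine csInf_le ⟨0, ?_⟩ ⟨a, b, y, h, rfl⟩
  rintro r ⟨a, b, y, -, rfl⟩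
  exact mul_nonneg (mul_nonneg (schattenNorm_nonneg _ _) (opNorm_nonneg _))
    (schattenNorm_nonneg _ _)

open scoped MatrixOrder in
lemma exists_invertible_factor {A : Matrix (Fin N) (Fin N) ℂ} (hA : A.PosDef) :
    ∃ S : Matrix (Fin N) (Fin N) ℂ, A = Sᴴ * S ∧ IsUnit S.det := by
  obtain ⟨S, hS⟩ : ∃ S : Matrix (Fin N) (Fin N) ℂ, A = Sᴴ * S :=
    CStarAlgebra.nonneg_iff_eq_star_mul_self.mp hA.posSemidef.nonneg
  refine ⟨S, hS, ?_⟩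
  have h := (isUnit_iff_isUnit_det A).mp hA.isUnit
  rw [hS, det_mul] at h
  exact isUnit_of_mul_isUnit_right h

/-- A positive block matrix with invertible diagonal blocks `A ⊗ 1`, `B ⊗ 1` controls the Pisier
norm of its corner. -/
lemma pisierNorm_le_of_posDef {p : ℝ≥0∞} (hptop : p ≠ ∞) {A B : Matrix (Fin N) (Fin N) ℂ}
    {X X' : Matrix (Fin N × Fin n) (Fin N × Fin n) ℂ} (hA : A.PosDef) (hB : B.PosDef)
    (h : (fromBlocks (A ⊗ₖ (1 : Matrix (Fin n) (Fin n) ℂ)) X X'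
      (B ⊗ₖ (1 : Matrix (Fin n) (Fin n) ℂ))).PosSemidef) :
    pisierNorm p X ≤ √(schattenNorm p A * schattenNorm p B) := by
  obtain ⟨S, rfl, hS⟩ := exists_invertible_factor hA
  obtain ⟨T, rfl, hT⟩ := exists_invertible_factor hB
  have hSc : IsUnit Sᴴ.det := by rw [det_conjTranspose]; exact hS.star
  set Y := (Sᴴ⁻¹ ⊗ₖ (1 : Matrix (Fin n) (Fin n) ℂ)) * X * (T⁻¹ ⊗ₖ 1) with hY
  have hconj := h.conjTranspose_mul_mul_same
    (fromBlocks (S⁻¹ ⊗ₖ (1 : Matrix (Fin n) (Fin n) ℂ)) 0 0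
      (T⁻¹ ⊗ₖ (1 : Matrix (Fin n) (Fin n) ℂ)))
  rw [fromBlocks_conjTranspose, fromBlocks_multiply, fromBlocks_multiply] at hconj
  have hone : ∀ {R : Matrix (Fin N) (Fin N) ℂ}, IsUnit R.det →
      R⁻¹ᴴ * (Rᴴ * R) * R⁻¹ = 1 := by
    intro R hR
    have hRc : IsUnit Rᴴ.det := by rw [det_conjTranspose]; exact hR.star
    rw [conjTranspose_nonsing_inv, ← mul_assoc, nonsing_inv_mul _ hRc, one_mul,
      mul_nonsing_inv _ hR]
  simp only [conjTranspose_kronecker, conjTranspose_one, conjTranspose_zero, zero_mul, mul_zero,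
    add_zero, zero_add, ← mul_kronecker_mul, mul_one, hone hS, hone hT,
    one_kronecker_one] at hconj
  have hYle : opNorm Y ≤ 1 := by
    rw [conjTranspose_nonsing_inv] at hconj
    exact opNorm_le_one_of_posSemidef_fromBlocks hconj
  have hX : X = (Sᴴ ⊗ₖ (1 : Matrix (Fin n) (Fin n) ℂ)) * Y * (T ⊗ₖ 1) := by
    rw [hY, mul_assoc, mul_assoc, mul_assoc, ← mul_kronecker_mul, nonsing_inv_mul _ hT, one_mul,
      one_kronecker_one, mul_one, ← mul_assoc, ← mul_kronecker_mul, mul_nonsing_inv _ hSc,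
      one_mul, one_kronecker_one, one_mul]
  have h2p : 2 * p ≠ ∞ := ENNReal.mul_ne_top (by simp) hptop
  rw [schattenNorm_conjTranspose_mul_self hptop, schattenNorm_conjTranspose_mul_self hptop,
    ← mul_pow, Real.sqrt_sq (mul_nonneg (schattenNorm_nonneg _ _) (schattenNorm_nonneg _ _))]
  refine (pisierNorm_le hX).trans ?_
  rw [schattenNorm_conjTranspose h2p]
  exact mul_le_mul_of_nonneg_right
    (mul_le_of_le_one_right (schattenNorm_nonneg _ _) hYle) (schattenNorm_nonneg _ _)

lemma pisierNorm_le_of_posSemidef {p : ℝ≥0∞} (hp : 1 ≤ p) (hptop : p ≠ ∞)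
    {A B : Matrix (Fin N) (Fin N) ℂ} {X X' : Matrix (Fin N × Fin n) (Fin N × Fin n) ℂ}
    (hA : A.PosSemidef) (hB : B.PosSemidef)
    (h : (fromBlocks (A ⊗ₖ (1 : Matrix (Fin n) (Fin n) ℂ)) X X'
      (B ⊗ₖ (1 : Matrix (Fin n) (Fin n) ℂ))).PosSemidef) :
    pisierNorm p X ≤ √(schattenNorm p A * schattenNorm p B) := by
  set c := schattenNorm p (1 : Matrix (Fin N) (Fin N) ℂ)
  have hlim : Filter.Tendsto
      (fun ε : ℝ => √((schattenNorm p A + ε * c) * (schattenNorm p B + ε * c)))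
      (nhdsWithin 0 (Set.Ioi 0)) (nhds √(schattenNorm p A * schattenNorm p B)) := by
    have : Continuous
        fun ε : ℝ => √((schattenNorm p A + ε * c) * (schattenNorm p B + ε * c)) := by fun_prop
    simpa using (this.tendsto 0).mono_left nhdsWithin_le_nhds
  refine ge_of_tendsto hlim ?_
  filter_upwards [self_mem_nhdsWithin] with ε hε
  have hε0 : (0 : ℝ) < ε := hε
  have hεc : (0 : ℂ) < ε := Complex.zero_lt_real.mpr hε0
  have hεone : ((ε : ℂ) • (1 : Matrix (Fin N) (Fin N) ℂ)).PosDef := PosDef.one.smul hεc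
  have hbound : ∀ {M : Matrix (Fin N) (Fin N) ℂ}, M.PosSemidef →
      schattenNorm p (M + (ε : ℂ) • 1) ≤ schattenNorm p M + ε * c := fun hM => by
    refine (schattenNorm_add_le_of_posSemidef hp hptop hM hεone.posSemidef).trans_eq ?_
    rw [schattenNorm_smul_of_posSemidef hp hptop hε0.le PosSemidef.one]
  have hblock : (fromBlocks ((A + (ε : ℂ) • 1) ⊗ₖ (1 : Matrix (Fin n) (Fin n) ℂ)) X X'
      ((B + (ε : ℂ) • 1) ⊗ₖ (1 : Matrix (Fin n) (Fin n) ℂ))).PosSemidef := by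
    have hid : (fromBlocks ((ε : ℂ) • (1 : Matrix (Fin N × Fin n) (Fin N × Fin n) ℂ)) 0 0
        ((ε : ℂ) • (1 : Matrix (Fin N × Fin n) (Fin N × Fin n) ℂ))).PosSemidef := by
      have := (PosSemidef.one (n := (Fin N × Fin n) ⊕ (Fin N × Fin n)) (R := ℂ)).smul hεc.le
      rwa [← fromBlocks_one, fromBlocks_smul, smul_zero] at this
    have := h.add hid
    rw [fromBlocks_add, add_zero, add_zero] at this
    simpa only [add_kronecker, smul_kronecker, one_kronecker_one] using this
  refine (pisierNorm_le_of_posDef hptop (hεone.posSemidef_add hA) (hεone.posSemidef_add hB)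
    hblock).trans (Real.sqrt_le_sqrt ?_)
  exact mul_le_mul (hbound hA) (hbound hB) (schattenNorm_nonneg _ _)
    (add_nonneg (schattenNorm_nonneg _ _) (mul_nonneg hε0.le (schattenNorm_nonneg _ _)))

end Pisier

section CompletelyPositive

variable {N m n : ℕ}

lemma CompletelyPositive.posSemidef {u : Matrix (Fin N) (Fin N) ℂ → Matrix (Fin m) (Fin m) ℂ}
    (hu : CompletelyPositive u) {κ : Type} [Fintype κ]
    {M : Matrix (κ × Fin N) (κ × Fin N) ℂ} (hM : M.PosSemidef) :
    (Matrix.of fun ki lj : κ × Fin m =>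
      u (Matrix.of fun i j => M (ki.1, i) (lj.1, j)) ki.2 lj.2).PosSemidef := by
  let e := Fintype.equivFin κ
  have h := hu _ _ (hM.submatrix (fun q : Fin (Fintype.card κ) × Fin N => (e.symm q.1, q.2)))
  convert h.submatrix (fun q : κ × Fin m => (e q.1, q.2)) using 1
  ext q r
  simp [ampLeft]

lemma CompletelyPositive.map_posSemidef
    {u : Matrix (Fin N) (Fin N) ℂ → Matrix (Fin m) (Fin m) ℂ}
    (hu : CompletelyPositive u) {A : Matrix (Fin N) (Fin N) ℂ} (hA : A.PosSemidef) :
    (u A).PosSemidef :=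
  (hu.posSemidef (κ := Unit) (hA.submatrix Prod.snd)).submatrix (fun i => ((), i))

lemma CompletelyPositive.posSemidef_fromBlocks_amp
    {u : Matrix (Fin N) (Fin N) ℂ → Matrix (Fin m) (Fin m) ℂ} (hu : CompletelyPositive u)
    {P X X' Q : Matrix (Fin N × Fin n) (Fin N × Fin n) ℂ}
    (h : (fromBlocks P X X' Q).PosSemidef) :
    (fromBlocks (amp u P) (amp u X) (amp u X') (amp u Q)).PosSemidef := by
  have h' := hu.posSemidef (h.submatrix fun q : (Fin n ⊕ Fin n) × Fin N =>
    Sum.map (fun k => (q.2, k)) (fun k => (q.2, k)) q.1)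
  convert h'.submatrix (fun q : (Fin m × Fin n) ⊕ (Fin m × Fin n) =>
    (Sum.map Prod.snd Prod.snd q, Sum.elim Prod.fst Prod.fst q)) using 1
  ext q r
  rcases q with q | q <;> rcases r with r | r <;> rfl

lemma amp_kronecker_one (u : Matrix (Fin N) (Fin N) ℂ →ₗ[ℂ] Matrix (Fin m) (Fin m) ℂ)
    (A : Matrix (Fin N) (Fin N) ℂ) :
    amp u (A ⊗ₖ (1 : Matrix (Fin n) (Fin n) ℂ)) = u A ⊗ₖ 1 := by
  ext ⟨i, k⟩ ⟨j, l⟩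
  have : (Matrix.of fun i j => (A ⊗ₖ (1 : Matrix (Fin n) (Fin n) ℂ)) (i, k) (j, l)) =
      (1 : Matrix (Fin n) (Fin n) ℂ) k l • A := by
    ext i j
    simp [kroneckerMap_apply, mul_comm]
  rw [amp, of_apply, this, map_smul, Matrix.smul_apply, kroneckerMap_apply, smul_eq_mul, mul_comm]

/-- A completely positive map sends a factorization of `x` to a positive block matrix having the
amplification of `x`, up to a phase, in its corner. -/
lemma CompletelyPositive.posSemidef_fromBlocks_of_factorization
    {u : Matrix (Fin N) (Fin N) ℂ →ₗ[ℂ] Matrix (Fin m) (Fin m) ℂ} (hu : CompletelyPositive u)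
    (a b : Matrix (Fin N) (Fin N) ℂ) (y : Matrix (Fin N × Fin n) (Fin N × Fin n) ℂ)
    {ε : ℂ} (hε : star ε * ε = 1) :
    ∃ X', (fromBlocks (u ((opNorm y : ℂ) • (a * aᴴ)) ⊗ₖ (1 : Matrix (Fin n) (Fin n) ℂ))
      (ε • amp u ((a ⊗ₖ (1 : Matrix (Fin n) (Fin n) ℂ)) * y *
        (b ⊗ₖ (1 : Matrix (Fin n) (Fin n) ℂ)))) X'
      (u ((opNorm y : ℂ) • (bᴴ * b)) ⊗ₖ (1 : Matrix (Fin n) (Fin n) ℂ))).PosSemidef := by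
  have h := (posSemidef_fromBlocks_of_opNorm (le_refl (opNorm y))).conjTranspose_mul_mul_same
    (fromBlocks (aᴴ ⊗ₖ (1 : Matrix (Fin n) (Fin n) ℂ)) 0 0
      (b ⊗ₖ (1 : Matrix (Fin n) (Fin n) ℂ)))
  rw [fromBlocks_conjTranspose, fromBlocks_multiply, fromBlocks_multiply] at h
  simp only [conjTranspose_kronecker, conjTranspose_one, conjTranspose_zero, zero_mul, mul_zero,
    add_zero, zero_add, conjTranspose_conjTranspose, mul_smul_comm, smul_mul_assoc, mul_one,
    ← mul_kronecker_mul, ← smul_kronecker, smul_zero] at h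
  have h' := hu.posSemidef_fromBlocks_amp h
  have h'' := posSemidef_fromBlocks_smul h' hε
  rw [amp_kronecker_one u, amp_kronecker_one u] at h''
  exact ⟨_, h''⟩

end CompletelyPositive

/-- Implication (iii) ⟹ (i) of Theorem 0.1 (matrix-algebra case, with quantitative bound):
a linear combination `u₁ - u₂ + i(u₃ - u₄)` of bounded completely positive maps is regular,
with `‖u‖_r ≤ C₁ + C₂ + C₃ + C₄`. -/
theorem regNorm_le_of_cp_combination {N : ℕ} (p : ℝ≥0∞) (hp : 1 ≤ p) (hptop : p ≠ ∞)
    (C₁ C₂ C₃ C₄ : ℝ)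
    (u₁ u₂ u₃ u₄ : Matrix (Fin N) (Fin N) ℂ →ₗ[ℂ] Matrix (Fin N) (Fin N) ℂ)
    (h₁ : CompletelyPositive (⇑u₁)) (h₂ : CompletelyPositive (⇑u₂))
    (h₃ : CompletelyPositive (⇑u₃)) (h₄ : CompletelyPositive (⇑u₄))
    (hb₁ : ∀ x : Matrix (Fin N) (Fin N) ℂ, schattenNorm p (u₁ x) ≤ C₁ * schattenNorm p x)
    (hb₂ : ∀ x : Matrix (Fin N) (Fin N) ℂ, schattenNorm p (u₂ x) ≤ C₂ * schattenNorm p x)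
    (hb₃ : ∀ x : Matrix (Fin N) (Fin N) ℂ, schattenNorm p (u₃ x) ≤ C₃ * schattenNorm p x)
    (hb₄ : ∀ x : Matrix (Fin N) (Fin N) ℂ, schattenNorm p (u₄ x) ≤ C₄ * schattenNorm p x) :
    regNorm p (fun x => u₁ x - u₂ x + Complex.I • (u₃ x - u₄ x)) ≤
      ENNReal.ofReal (C₁ + C₂ + C₃ + C₄) := by
  have hC : ∀ {u : Matrix (Fin N) (Fin N) ℂ →ₗ[ℂ] Matrix (Fin N) (Fin N) ℂ} {C : ℝ},
      (∀ x, schattenNorm p (u x) ≤ C * schattenNorm p x) → 0 < N → 0 ≤ C := by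
    intro u C hb hN
    have : Nonempty (Fin N) := ⟨⟨0, hN⟩⟩
    exact nonneg_of_mul_nonneg_left ((schattenNorm_nonneg p _).trans (hb 1))
      (schattenNorm_one_pos hptop)
  set C := C₁ + C₂ + C₃ + C₄ with hCdef
  refine iSup_le fun k => iSup_le fun x => iSup_le fun hx => ?_
  have h2p : 2 * p ≠ ∞ := ENNReal.mul_ne_top (by simp) hptop
  set u : Matrix (Fin N) (Fin N) ℂ →ₗ[ℂ] Matrix (Fin N) (Fin N) ℂ := u₁ + u₂ + u₃ + u₄ with hu
  have hbu : ∀ {A : Matrix (Fin N) (Fin N) ℂ}, A.PosSemidef →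
      schattenNorm p (u A) ≤ C * schattenNorm p A := by
    intro A hA
    have hadd := fun {M M' : Matrix (Fin N) (Fin N) ℂ} (hM : M.PosSemidef)
      (hM' : M'.PosSemidef) => schattenNorm_add_le_of_posSemidef hp hptop hM hM'
    have p₁ := h₁.map_posSemidef hA
    have p₂ := h₂.map_posSemidef hA
    have p₃ := h₃.map_posSemidef hA
    have p₄ := h₄.map_posSemidef hA
    calc schattenNorm p (u₁ A + u₂ A + u₃ A + u₄ A)
        ≤ schattenNorm p (u₁ A) + schattenNorm p (u₂ A) + schattenNorm p (u₃ A) +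
          schattenNorm p (u₄ A) := by
          linarith [hadd p₁ p₂, hadd (p₁.add p₂) p₃, hadd ((p₁.add p₂).add p₃) p₄]
      _ ≤ C * schattenNorm p A := by
          rw [hCdef]
          linarith [hb₁ A, hb₂ A, hb₃ A, hb₄ A]
  have hpos : ∀ {A : Matrix (Fin N) (Fin N) ℂ}, A.PosSemidef → (u A).PosSemidef := fun hA =>
    (((h₁.map_posSemidef hA).add (h₂.map_posSemidef hA)).add (h₃.map_posSemidef hA)).add
      (h₄.map_posSemidef hA)
  set X := amp (fun x => u₁ x - u₂ x + Complex.I • (u₃ x - u₄ x)) x with hX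
  have hfac : ∀ r ∈ { r | ∃ (a b : Matrix (Fin N) (Fin N) ℂ)
      (y : Matrix (Fin N × Fin (k + 1)) (Fin N × Fin (k + 1)) ℂ),
      x = (a ⊗ₖ (1 : Matrix (Fin (k + 1)) (Fin (k + 1)) ℂ)) * y *
        (b ⊗ₖ (1 : Matrix (Fin (k + 1)) (Fin (k + 1)) ℂ)) ∧
      r = schattenNorm (2 * p) a * opNorm y * schattenNorm (2 * p) b },
      pisierNorm p X ≤ |C| * r := by
    rintro r ⟨a, b, y, hxy, rfl⟩
    obtain ⟨X₁, b₁⟩ := h₁.posSemidef_fromBlocks_of_factorization a b y (ε := 1) (by simp)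
    obtain ⟨X₂, b₂⟩ := h₂.posSemidef_fromBlocks_of_factorization a b y (ε := -1) (by simp)
    obtain ⟨X₃, b₃⟩ := h₃.posSemidef_fromBlocks_of_factorization a b y (ε := Complex.I) (by simp)
    obtain ⟨X₄, b₄⟩ := h₄.posSemidef_fromBlocks_of_factorization a b y (ε := -Complex.I) (by simp)
    have hsum := ((b₁.add b₂).add b₃).add b₄
    rw [← hxy] at hsum
    simp only [fromBlocks_add, ← add_kronecker, ← LinearMap.add_apply, ← hu] at hsum
    have hcorner : (1 : ℂ) • amp u₁ x + (-1 : ℂ) • amp u₂ x + Complex.I • amp u₃ x +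
        (-Complex.I) • amp u₄ x = X := by
      ext i j
      simp only [hX, amp, of_apply, Matrix.add_apply, Matrix.sub_apply, Matrix.smul_apply,
        smul_eq_mul]
      ring
    rw [hcorner] at hsum
    have ht := opNorm_nonneg y
    have pa : ((opNorm y : ℂ) • (a * aᴴ)).PosSemidef :=
      (posSemidef_self_mul_conjTranspose a).smul (Complex.zero_le_real.mpr ht)
    have pb : ((opNorm y : ℂ) • (bᴴ * b)).PosSemidef :=
      (posSemidef_conjTranspose_mul_self b).smul (Complex.zero_le_real.mpr ht)
    have ba := hbu pa
    have bb := hbu pb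
    rw [schattenNorm_smul_of_posSemidef hp hptop ht (posSemidef_self_mul_conjTranspose a),
      schattenNorm_mul_conjTranspose_self hptop] at ba
    rw [schattenNorm_smul_of_posSemidef hp hptop ht (posSemidef_conjTranspose_mul_self b),
      schattenNorm_conjTranspose_mul_self hptop] at bb
    refine (pisierNorm_le_of_posSemidef hp hptop (hpos pa) (hpos pb) hsum).trans ?_
    have hr : 0 ≤ schattenNorm (2 * p) a * opNorm y * schattenNorm (2 * p) b :=
      mul_nonneg (mul_nonneg (schattenNorm_nonneg _ _) ht) (schattenNorm_nonneg _ _)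
    rw [← abs_of_nonneg hr, ← abs_mul, ← Real.sqrt_sq_eq_abs]
    refine Real.sqrt_le_sqrt ((mul_le_mul ba bb (schattenNorm_nonneg _ _)
      ((schattenNorm_nonneg _ _).trans ba)).trans_eq ?_)
    ring
  rcases N.eq_zero_or_pos with rfl | hN
  · have hzero : pisierNorm p X ≤ 0 := by
      refine (pisierNorm_le (a := 1) (b := 1) (y := X) (by simp)).trans_eq ?_
      rw [schattenNorm_eq_zero_of_isEmpty h2p (by positivity), zero_mul, zero_mul]
    rw [ENNReal.ofReal_of_nonpos hzero]
    exact zero_le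
  have hCnn : 0 ≤ C :=
    add_nonneg (add_nonneg (add_nonneg (hC hb₁ hN) (hC hb₂ hN)) (hC hb₃ hN)) (hC hb₄ hN)
  refine ENNReal.ofReal_le_ofReal (le_of_forall_pos_le_add fun δ hδ => ?_)
  obtain ⟨r, hr, hlt⟩ := exists_lt_of_csInf_lt
    (Set.nonempty_of_mem (Set.mem_ofPred.mpr ⟨1, 1, x, by simp, rfl⟩))
    (hx.trans_lt (lt_add_of_pos_right 1 (div_pos hδ (add_pos_of_nonneg_of_pos hCnn one_pos))))
  refine (hfac r hr).trans ?_
  rw [abs_of_nonneg hCnn]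
  calc C * r ≤ C * (1 + δ / (C + 1)) := mul_le_mul_of_nonneg_left hlt.le hCnn
    _ = C + δ * (C / (C + 1)) := by ring
    _ ≤ C + δ := by
      have : C / (C + 1) ≤ 1 := (div_le_one (by linarith)).mpr (by linarith)
      linarith [mul_le_of_le_one_right hδ.le this]
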